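/- Let x₁, …, x_N be independent random points distributed uniformly on S². Let H_N = ⊕_{i=1}^N x_i^⊥ (a 2N-dimensional Euclidean space with the direct-sum inner product) and let C_N : H_N → H_N be the symmetric operator given on the i-th component by (C_N s)(i) = (1/N)·∑_{j ≠ i} C(x_i, x_j)(s(j)) (almost surely x_i ≠ ±x_j for i ≠ j, so this is well defined). Let 𝕍_N ⊂ H_N be the direct sum of the eigenspaces of C_N with eigenvalue greater than 1/3. Then the probability that dim 𝕍_N = 3 tends to 1 as N → ∞. -/

import Mathlib

noncomputable section

open MeasureTheory Submodule
open scoped RealInnerProductSpace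

abbrev V : Type := EuclideanSpace ℝ (Fin 3)

abbrev S2 : Type := Metric.sphere (0 : V) 1

/-- The plane `x^⊥` orthogonal to a point `x` of the unit sphere. -/
def plane (x : S2) : Submodule ℝ V := (ℝ ∙ (x : V))ᗮ

/-- The common line `x^⊥ ∩ y^⊥`. -/
def cline (x y : S2) : Submodule ℝ V := plane x ⊓ plane y

/-- The common-lines kernel `C(x,y) : V → V`: orthogonal projection onto the line
`x^⊥ ∩ y^⊥`.  Its restriction to `y^⊥` is the kernel of the paper: it sends `v ∈ y^⊥` to
the orthogonal projection of `v` onto `x^⊥ ∩ y^⊥`, viewed inside `x^⊥`. -/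
def Cker (x y : S2) : V →ₗ[ℝ] V :=
  (cline x y).subtype ∘ₗ (orthogonalProjection (cline x y)).toLinearMap

/-- The map on the sphere induced by a linear isometry of `V`. -/
def sphereMap (g : V ≃ₗᵢ[ℝ] V) (x : S2) : S2 :=
  ⟨g x, by
    have := mem_sphere_zero_iff_norm.mp x.2
    simp [mem_sphere_zero_iff_norm, this]⟩

/-- The antipodal map on the sphere. -/
def negS (x : S2) : S2 :=
  ⟨-(x : V), by
    have := mem_sphere_zero_iff_norm.mp x.2
    simp [mem_sphere_zero_iff_norm, this]⟩

/-- The discrete common lines operator determined by `N` points `p i` of the sphere, acting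
on `⊕ᵢ V ⊇ H_N = ⊕ᵢ (p i)^⊥` by `(C_N s)(i) = (1/N)·∑_{j ≠ i} C(p i, p j)(s j)`.  Each
kernel `Cker (p i) (p j)` kills the line `ℝ·(p j)` and takes values in `(p i)^⊥`, so this
endomorphism vanishes on `⊕ᵢ ℝ·(p i)` and restricts to the operator `C_N : H_N → H_N` of
the paper; in particular its eigenspaces for nonzero eigenvalues are contained in `H_N` and
coincide with those of `C_N`. -/
def CN (N : ℕ) (p : Fin N → S2) : (Fin N → V) →ₗ[ℝ] (Fin N → V) :=
  LinearMap.pi fun i =>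
    (N : ℝ)⁻¹ • ∑ j ∈ Finset.univ.erase i, (Cker (p i) (p j)) ∘ₗ LinearMap.proj j

/-- The intrinsic model `𝕍_N`: the sum of the eigenspaces of `C_N` with eigenvalue `> 1/3`. -/
def VN (N : ℕ) (p : Fin N → S2) : Submodule ℝ (Fin N → V) :=
  ⨆ lam : ℝ, ⨆ _ : lam > 1 / 3, Module.End.eigenspace (CN N p) lam

section lin
variable {E : Type*} [NormedAddCommGroup E] [InnerProductSpace ℝ E] [FiniteDimensional ℝ E]

lemma spec_form (T : E →ₗ[ℝ] E) (hT : T.IsSymmetric) (s : E) :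
    ⟪T s, s⟫ = ∑ i, hT.eigenvalues rfl i * ⟪hT.eigenvectorBasis rfl i, s⟫ ^ 2 := by
  rw [← OrthonormalBasis.sum_inner_mul_inner (hT.eigenvectorBasis rfl)]
  refine Finset.sum_congr rfl fun i _ => ?_
  have := hT s (hT.eigenvectorBasis rfl i)
  rw [this, hT.apply_eigenvectorBasis, real_inner_smul_right, real_inner_comm]
  simp
  ring

lemma norm_form (T : E →ₗ[ℝ] E) (hT : T.IsSymmetric) (s : E) :
    ‖s‖ ^ 2 = ∑ i, ⟪hT.eigenvectorBasis rfl i, s⟫ ^ 2 := by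
  rw [← real_inner_self_eq_norm_sq, ← OrthonormalBasis.sum_inner_mul_inner (hT.eigenvectorBasis rfl)]
  refine Finset.sum_congr rfl fun i _ => ?_
  rw [real_inner_comm]
  ring

lemma spec_low (T : E →ₗ[ℝ] E) (hT : T.IsSymmetric) (c : ℝ) (s : E)
    (hs : s ∈ (⨆ lam : ℝ, ⨆ _ : lam > c, Module.End.eigenspace T lam)ᗮ) :
    ⟪T s, s⟫ ≤ c * ‖s‖ ^ 2 := by
  rw [spec_form T hT, norm_form T hT, Finset.mul_sum]
  refine Finset.sum_le_sum fun i _ => ?_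
  by_cases h : hT.eigenvalues rfl i > c
  · have : ⟪hT.eigenvectorBasis rfl i, s⟫ = 0 := by
      refine hs _ ?_
      refine Submodule.mem_iSup_of_mem (hT.eigenvalues rfl i) (Submodule.mem_iSup_of_mem h ?_)
      rw [Module.End.mem_eigenspace_iff]
      exact hT.apply_eigenvectorBasis rfl i
    simp [this]
  · exact mul_le_mul_of_nonneg_right (not_lt.mp h) (sq_nonneg _)

lemma spec_high (T : E →ₗ[ℝ] E) (hT : T.IsSymmetric) (c : ℝ) (s : E)
    (hs : s ∈ (⨆ lam : ℝ, ⨆ _ : lam > c, Module.End.eigenspace T lam)) (h0 : s ≠ 0) :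
    c * ‖s‖ ^ 2 < ⟪T s, s⟫ := by
  have key : ∀ i, ¬ hT.eigenvalues rfl i > c → ⟪hT.eigenvectorBasis rfl i, s⟫ = 0 := by
    intro i hi
    have : (⨆ lam : ℝ, ⨆ _ : lam > c, Module.End.eigenspace T lam) ≤
        (ℝ ∙ (hT.eigenvectorBasis rfl i))ᗮ := by
      refine iSup_le fun lam => iSup_le fun hl => ?_
      intro z hz
      rw [Submodule.mem_orthogonal_singleton_iff_inner_right]
      rw [Module.End.mem_eigenspace_iff] at hz
      have h1 := hT (hT.eigenvectorBasis rfl i) z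
      rw [hz, hT.apply_eigenvectorBasis, real_inner_smul_right, real_inner_smul_left] at h1
      simp only [RCLike.ofReal_real_eq_id, id] at h1
      have h2 : (lam - hT.eigenvalues rfl i) * ⟪hT.eigenvectorBasis rfl i, z⟫ = 0 := by linarith
      rcases mul_eq_zero.mp h2 with h3 | h3
      · exfalso; apply hi; linarith
      · exact h3
    exact Submodule.mem_orthogonal_singleton_iff_inner_right.mp (this hs)
  have hle : ∀ i, c * ⟪hT.eigenvectorBasis rfl i, s⟫ ^ 2 ≤
      hT.eigenvalues rfl i * ⟪hT.eigenvectorBasis rfl i, s⟫ ^ 2 := by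
    intro i
    by_cases h : hT.eigenvalues rfl i > c
    · exact mul_le_mul_of_nonneg_right h.le (sq_nonneg _)
    · simp [key i h]
  have hex : ∃ i, ⟪hT.eigenvectorBasis rfl i, s⟫ ≠ 0 := by
    by_contra! hn
    apply h0
    have := norm_form T hT s
    simp [hn] at this
    exact this
  obtain ⟨i, hi⟩ := hex
  rw [spec_form T hT, norm_form T hT, Finset.mul_sum]
  refine Finset.sum_lt_sum (fun i _ => hle i) ⟨i, Finset.mem_univ _, ?_⟩
  have : hT.eigenvalues rfl i > c := by
    by_contra hn
    exact hi (key i hn)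
  exact mul_lt_mul_of_pos_right this (by positivity)

lemma finrank_spec (T : E →ₗ[ℝ] E) (hT : T.IsSymmetric) (c : ℝ)
    (L : E →ₗ[ℝ] V) (J : V →ₗ[ℝ] E)
    (hL : ∀ s, L s = 0 → ⟪T s, s⟫ ≤ c * ‖s‖ ^ 2)
    (hJ : ∀ v, v ≠ 0 → c * ‖J v‖ ^ 2 < ⟪T (J v), J v⟫) :
    Module.finrank ℝ ↥(⨆ lam : ℝ, ⨆ _ : lam > c, Module.End.eigenspace T lam) = 3 := by
  set U := (⨆ lam : ℝ, ⨆ _ : lam > c, Module.End.eigenspace T lam) with hU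
  have hV : Module.finrank ℝ V = 3 := by simp [V]
  apply le_antisymm
  · rw [← hV]
    refine LinearMap.finrank_le_finrank_of_injective (f := L ∘ₗ U.subtype) ?_
    rw [injective_iff_map_eq_zero]
    rintro ⟨s, hs⟩ h
    by_contra hn
    have h0 : s ≠ 0 := fun h => hn (by simp [h])
    have h1 := hL s h
    have h2 := spec_high T hT c s hs h0
    linarith
  · rw [← hV]
    refine LinearMap.finrank_le_finrank_of_injective
      (f := (U.orthogonalProjectionOnto).toLinearMap ∘ₗ J) ?_
    rw [injective_iff_map_eq_zero]
    intro v h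
    by_contra hn
    have h1 := hJ v hn
    have h2 : J v ∈ Uᗮ := by
      simpa using h
    have := spec_low T hT c _ h2
    linarith

lemma finrank_transfer {M : Type*} [AddCommGroup M] [Module ℝ M] (e : M ≃ₗ[ℝ] E)
    (T : M →ₗ[ℝ] M) (c : ℝ) :
    Module.finrank ℝ ↥(⨆ lam : ℝ, ⨆ _ : lam > c, Module.End.eigenspace T lam) =
    Module.finrank ℝ ↥(⨆ lam : ℝ, ⨆ _ : lam > c, Module.End.eigenspace
      (e.toLinearMap ∘ₗ T ∘ₗ e.symm.toLinearMap) lam) := by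
  have : ∀ lam : ℝ, (Module.End.eigenspace T lam).map e.toLinearMap =
      Module.End.eigenspace (e.toLinearMap ∘ₗ T ∘ₗ e.symm.toLinearMap) lam := by
    intro lam
    ext z
    rw [Submodule.mem_map_equiv, Module.End.mem_eigenspace_iff, Module.End.mem_eigenspace_iff]
    constructor
    · intro h
      simp [h]
    · intro h
      apply e.injective
      simpa using h
  have h2 : (⨆ lam : ℝ, ⨆ _ : lam > c, Module.End.eigenspace T lam).map e.toLinearMap =
      ⨆ lam : ℝ, ⨆ _ : lam > c, Module.End.eigenspace
      (e.toLinearMap ∘ₗ T ∘ₗ e.symm.toLinearMap) lam := by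
    rw [Submodule.map_iSup]
    refine iSup_congr fun lam => ?_
    rw [Submodule.map_iSup]
    refine iSup_congr fun _ => this lam
  rw [← h2]
  exact (LinearEquiv.finrank_map_eq e _).symm
end lin
def cr (x y : V) : V :=
  !₂[x 1 * y 2 - x 2 * y 1, x 2 * y 0 - x 0 * y 2, x 0 * y 1 - x 1 * y 0]

lemma inner3 (x y : V) : ⟪x, y⟫ = x 0 * y 0 + x 1 * y 1 + x 2 * y 2 := by
  simp [PiLp.inner_apply, Fin.sum_univ_three]
  try ring

lemma gram (x y s s' : V) : ⟪cr x y, s⟫ * ⟪cr x y, s'⟫ =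
    ⟪s, s'⟫ * (⟪x, x⟫ * ⟪y, y⟫ - ⟪x, y⟫ ^ 2) - ⟪x, s⟫ * ⟪x, s'⟫ * ⟪y, y⟫
      - ⟪y, s⟫ * ⟪y, s'⟫ * ⟪x, x⟫ + ⟪x, y⟫ * (⟪x, s⟫ * ⟪y, s'⟫ + ⟪y, s⟫ * ⟪x, s'⟫) := by
  simp only [inner3, cr]
  simp
  ring

lemma cr_cr (x y s s' : V) : ⟪cr x s, cr y s'⟫ = ⟪x, y⟫ * ⟪s, s'⟫ - ⟪x, s'⟫ * ⟪y, s⟫ := by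
  simp only [inner3, cr]
  simp
  ring

lemma cr_left (x y : V) : ⟪cr x y, x⟫ = 0 := by
  simp only [inner3, cr]
  simp
  ring

lemma cr_right (x y : V) : ⟪cr x y, y⟫ = 0 := by
  simp only [inner3, cr]
  simp
  ring

lemma S2_self (x : S2) : ⟪(x : V), (x : V)⟫ = 1 := by
  rw [real_inner_self_eq_norm_sq, mem_sphere_zero_iff_norm.mp x.2]; norm_num

lemma mem_cline (x y : S2) (z : V) : z ∈ cline x y ↔ ⟪(x : V), z⟫ = 0 ∧ ⟪(y : V), z⟫ = 0 := by
  simp [cline, plane, Submodule.mem_inf, Submodule.mem_orthogonal_singleton_iff_inner_right]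

lemma Cker_mem (x y : S2) (s : V) : Cker x y s ∈ cline x y := by
  simp [Cker]

lemma Cker_inner (x y : S2) (s z : V) (hz : z ∈ cline x y) : ⟪z, Cker x y s⟫ = ⟪z, s⟫ := by
  have h := Submodule.starProjection_inner_eq_zero (K := cline x y) s z hz
  have h2 : ⟪z, s - Cker x y s⟫ = 0 := by
    rw [real_inner_comm]
    simpa [Cker] using h
  rw [inner_sub_right] at h2
  linarith

lemma Cker_symm (x y : S2) (s s' : V) : ⟪s, Cker x y s'⟫ = ⟪Cker x y s, s'⟫ := by
  rw [← Cker_inner x y s' _ (Cker_mem x y s), real_inner_comm,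
    ← Cker_inner x y s _ (Cker_mem x y s'), real_inner_comm]

lemma Cker_plane_left (x y : S2) (v : V) : ⟪(x : V), Cker x y v⟫ = 0 :=
  ((mem_cline x y _).mp (Cker_mem x y v)).1

lemma Cker_plane_right (x y : S2) (v : V) : ⟪(y : V), Cker x y v⟫ = 0 :=
  ((mem_cline x y _).mp (Cker_mem x y v)).2

lemma Cker_unique (x y : S2) (s p : V) (hp : p ∈ cline x y)
    (h : ∀ z ∈ cline x y, ⟪z, p⟫ = ⟪z, s⟫) : Cker x y s = p := by
  have hm : Cker x y s - p ∈ cline x y := Submodule.sub_mem _ (Cker_mem x y s) hp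
  have : ⟪Cker x y s - p, Cker x y s - p⟫ = 0 := by
    rw [inner_sub_right, Cker_inner x y s _ hm, h _ hm, sub_self]
  exact sub_eq_zero.mp (inner_self_eq_zero.mp this)

lemma Cker_comm (x y : S2) : Cker x y = Cker y x := by
  have h : cline x y = cline y x := inf_comm _ _
  ext1 s
  apply Cker_unique
  · rw [h]; exact Cker_mem y x s
  · intro z hz
    rw [h] at hz
    exact Cker_inner y x s z hz

/-- projection on the plane -/
def Pr (x : S2) : V →ₗ[ℝ] V := LinearMap.id - (innerₛₗ ℝ (x : V)).smulRight (x : V)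

lemma Pr_apply (x : S2) (s : V) : Pr x s = s - ⟪(x : V), s⟫ • (x : V) := by
  simp [Pr]

lemma Pr_inner (x y : S2) (s s' : V) : ⟪Pr x s, Pr y s'⟫ =
    ⟪s, s'⟫ - ⟪(x : V), s⟫ * ⟪(x : V), s'⟫ - ⟪(y : V), s⟫ * ⟪(y : V), s'⟫
      + ⟪(x : V), y⟫ * ⟪(x : V), s⟫ * ⟪(y : V), s'⟫ := by
  rw [Pr_apply, Pr_apply]
  simp only [inner_sub_left, inner_sub_right, real_inner_smul_left, real_inner_smul_right]
  rw [real_inner_comm (y : V) s]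
  ring

lemma t_sq_le (x y : S2) : ⟪(x : V), (y : V)⟫ ^ 2 ≤ 1 := by
  have h := real_inner_mul_inner_self_le (x : V) (y : V)
  rw [S2_self, S2_self] at h
  nlinarith

lemma cs2 (a b c d A B : ℝ) (hA : 0 ≤ A) (hB : 0 ≤ B) (h1 : a ^ 2 + b ^ 2 ≤ A ^ 2)
    (h2 : c ^ 2 + d ^ 2 ≤ B ^ 2) : |a * c - b * d| ≤ A * B := by
  apply abs_le_of_sq_le_sq _ (by positivity)
  have h3 : (a * c - b * d) ^ 2 ≤ (a ^ 2 + b ^ 2) * (c ^ 2 + d ^ 2) := by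
    nlinarith [sq_nonneg (a * d + b * c)]
  have h4 : (a ^ 2 + b ^ 2) * (c ^ 2 + d ^ 2) ≤ A ^ 2 * B ^ 2 :=
    mul_le_mul h1 h2 (by positivity) (by positivity)
  nlinarith

lemma formC (x y : S2) (s s' : V) :
    |⟪s, Cker x y s'⟫ - ⟪Pr x s, Pr y s'⟫
      + 1 / 2 * (⟪(x : V), y⟫ * ⟪cr x s, cr y s'⟫)| ≤
    1 / 2 * |⟪(x : V), (y : V)⟫| * (‖s‖ * ‖s'‖) := by
  have hx := S2_self x
  have hy := S2_self y
  rw [Pr_inner, cr_cr]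
  rcases (t_sq_le x y).lt_or_eq with hlt | heq
  · set t := ⟪(x : V), (y : V)⟫ with ht
    have hq : 0 < 1 - t ^ 2 := by linarith
    have hC : Cker x y s' = (⟪cr x y, s'⟫ / (1 - t ^ 2)) • cr x y := by
      apply Cker_unique
      · rw [mem_cline, real_inner_smul_right, real_inner_smul_right, real_inner_comm _ (x : V), cr_left,
          real_inner_comm _ (y : V), cr_right]
        simp
      · intro z hz
        rw [mem_cline] at hz
        have := gram x y z s'
        rw [hz.1, hz.2, hx, hy, ← ht] at this
        rw [real_inner_smul_right, real_inner_comm _ z]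
        field_simp
        linarith
    have g1 := gram x y s s'
    have g2 := gram x y s s
    have g3 := gram x y s' s'
    rw [hx, hy, ← ht] at g1 g2 g3
    rw [hC, real_inner_smul_right, real_inner_comm (cr x y) s]
    have n1 : ⟪cr x y, s⟫ ^ 2 + (t * ⟪(x : V), s⟫ - ⟪(y : V), s⟫) ^ 2 ≤
        (Real.sqrt (1 - t ^ 2) * ‖s‖) ^ 2 := by
      rw [mul_pow, Real.sq_sqrt hq.le, ← real_inner_self_eq_norm_sq]
      nlinarith [mul_nonneg hq.le (sq_nonneg ⟪(x : V), s⟫)]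
    have n2 : ⟪cr x y, s'⟫ ^ 2 + (⟪(x : V), s'⟫ - t * ⟪(y : V), s'⟫) ^ 2 ≤
        (Real.sqrt (1 - t ^ 2) * ‖s'‖) ^ 2 := by
      rw [mul_pow, Real.sq_sqrt hq.le, ← real_inner_self_eq_norm_sq]
      nlinarith [mul_nonneg hq.le (sq_nonneg ⟪(y : V), s'⟫)]
    have n1' : (t * ⟪cr x y, s⟫) ^ 2 + (t * ⟪(x : V), s⟫ - ⟪(y : V), s⟫) ^ 2 ≤
        (Real.sqrt (1 - t ^ 2) * ‖s‖) ^ 2 := by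
      refine le_trans ?_ n1
      nlinarith [mul_nonneg hq.le (sq_nonneg ⟪cr x y, s⟫)]
    have hb := cs2 _ _ _ _ _ _ (by positivity) (by positivity) n1' n2
    have hsq := Real.sq_sqrt hq.le
    have hb2 : |t * ⟪cr x y, s⟫ * ⟪cr x y, s'⟫ -
        (t * ⟪(x : V), s⟫ - ⟪(y : V), s⟫) * (⟪(x : V), s'⟫ - t * ⟪(y : V), s'⟫)| ≤
        (1 - t ^ 2) * (‖s‖ * ‖s'‖) := by
      refine hb.trans (le_of_eq ?_)
      linear_combination (‖s‖ * ‖s'‖) * hsq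
    have e : (⟪cr x y, s'⟫ / (1 - t ^ 2) * ⟪cr x y, s⟫ -
          (⟪s, s'⟫ - ⟪(x : V), s⟫ * ⟪(x : V), s'⟫ - ⟪(y : V), s⟫ * ⟪(y : V), s'⟫
            + t * ⟪(x : V), s⟫ * ⟪(y : V), s'⟫) +
        1 / 2 * (t * (t * ⟪s, s'⟫ - ⟪(x : V), s'⟫ * ⟪(y : V), s⟫))) =
        1 / 2 * t * ((t * ⟪cr x y, s⟫ * ⟪cr x y, s'⟫ -
        (t * ⟪(x : V), s⟫ - ⟪(y : V), s⟫) * (⟪(x : V), s'⟫ - t * ⟪(y : V), s'⟫)) /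
          (1 - t ^ 2)) := by
      field_simp
      linear_combination (2 - t ^ 2) * g1
    rw [e, abs_mul, abs_mul, abs_of_pos (by norm_num : (0:ℝ) < 1 / 2), abs_div, abs_of_pos hq]
    refine mul_le_mul_of_nonneg_left ?_ (by positivity)
    rw [div_le_iff₀ hq]
    linarith
  · set t := ⟪(x : V), (y : V)⟫ with ht
    have hyx : (y : V) = t • (x : V) := by
      have : ⟪(y : V) - t • (x : V), (y : V) - t • (x : V)⟫ = 0 := by
        simp only [inner_sub_left, inner_sub_right, real_inner_smul_left, real_inner_smul_right,
          hx, hy, real_inner_comm (x : V) (y : V), ← ht]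
        linear_combination -heq
      exact sub_eq_zero.mp (inner_self_eq_zero.mp this)
    have hyz : ∀ z : V, ⟪(y : V), z⟫ = t * ⟪(x : V), z⟫ := by
      intro z; rw [hyx, real_inner_smul_left]
    have hC : Cker x y s' = s' - ⟪(x : V), s'⟫ • (x : V) := by
      have h0 : ⟪(x : V), s' - ⟪(x : V), s'⟫ • (x : V)⟫ = 0 := by
        rw [inner_sub_right, real_inner_smul_right, hx]; ring
      apply Cker_unique
      · rw [mem_cline, hyz, h0]; simp
      · intro z hz
        rw [mem_cline] at hz
        rw [inner_sub_right, real_inner_smul_right, real_inner_comm (x : V) z, hz.1]; ring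
    rw [hC, inner_sub_right, real_inner_smul_right, hyz, hyz, real_inner_comm (x : V) s]
    have e : (⟪s, s'⟫ - ⟪(x : V), s'⟫ * ⟪(x : V), s⟫ -
          (⟪s, s'⟫ - ⟪(x : V), s⟫ * ⟪(x : V), s'⟫ - t * ⟪(x : V), s⟫ * (t * ⟪(x : V), s'⟫)
            + t * ⟪(x : V), s⟫ * (t * ⟪(x : V), s'⟫)) +
        1 / 2 * (t * (t * ⟪s, s'⟫ - ⟪(x : V), s'⟫ * (t * ⟪(x : V), s⟫)))) =
        1 / 2 * (⟪cr x s, cr x s'⟫) := by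
      rw [cr_cr, hx]
      linear_combination 1 / 2 * (⟪s, s'⟫ - ⟪(x : V), s⟫ * ⟪(x : V), s'⟫) * heq
    rw [e, abs_mul, abs_of_pos (by norm_num : (0:ℝ) < 1 / 2)]
    have ht1 : |t| = 1 := by
      rw [← sq_abs] at heq
      nlinarith [abs_nonneg t]
    rw [ht1, mul_one]
    refine mul_le_mul_of_nonneg_left ?_ (by norm_num)
    have hn : ∀ z : V, ‖cr x z‖ ≤ ‖z‖ := by
      intro z
      apply le_of_sq_le_sq _ (norm_nonneg _)
      rw [← real_inner_self_eq_norm_sq, ← real_inner_self_eq_norm_sq, cr_cr, hx]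
      nlinarith [sq_nonneg ⟪(x : V), z⟫]
    exact (abs_real_inner_le_norm _ _).trans
      (mul_le_mul (hn _) (hn _) (norm_nonneg _) (norm_nonneg _))

lemma formA (x y : S2) (v : V) :
    ⟪cr x y, v⟫ ^ 2 * (1 + ⟪(x : V), (y : V)⟫ ^ 2) ≤ ⟪v, Cker x y v⟫ := by
  have hm : cr x y ∈ cline x y := by
    rw [mem_cline, real_inner_comm _ (x : V), cr_left, real_inner_comm _ (y : V), cr_right]; simp
  have h1 := Cker_inner x y v _ hm
  have h2 : ⟪v, Cker x y v⟫ = ⟪Cker x y v, Cker x y v⟫ := by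
    rw [Cker_inner x y v _ (Cker_mem x y v), real_inner_comm]
  have h3 := real_inner_mul_inner_self_le (cr x y) (Cker x y v)
  have h4 : ⟪cr x y, cr x y⟫ = 1 - ⟪(x : V), (y : V)⟫ ^ 2 := by
    rw [cr_cr, S2_self, S2_self, real_inner_comm (y : V)]; ring
  rw [h2]
  rw [h1, h4] at h3
  set t := ⟪(x : V), (y : V)⟫
  set P := ⟪Cker x y v, Cker x y v⟫
  have hP : 0 ≤ P := real_inner_self_nonneg
  nlinarith [mul_nonneg hP (sq_nonneg (t ^ 2)), mul_le_mul_of_nonneg_right h3 (by positivity : 0 ≤ 1 + t ^ 2)]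
lemma Zsum_nonneg {N : ℕ} (p : Fin N → S2) (s : Fin N → V) :
    0 ≤ ∑ i, ∑ j, ⟪(p i : V), (p j : V)⟫ * ⟪cr (p i) (s i), cr (p j) (s j)⟫ := by
  have : ∑ i, ∑ j, ⟪(p i : V), (p j : V)⟫ * ⟪cr (p i) (s i), cr (p j) (s j)⟫ =
      ∑ a : Fin 3, ∑ b : Fin 3, (∑ i, (p i : V) a * cr (p i) (s i) b) ^ 2 := by
    have h : ∀ a b : Fin 3, (∑ i, (p i : V) a * cr (p i) (s i) b) ^ 2 =
        ∑ i, ∑ j, ((p i : V) a * cr (p i) (s i) b) * ((p j : V) a * cr (p j) (s j) b) := by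
      intro a b
      rw [sq, Finset.sum_mul_sum]
    simp only [h, Fin.sum_univ_three, ← Finset.sum_add_distrib]
    refine Finset.sum_congr rfl fun i _ => Finset.sum_congr rfl fun j _ => ?_
    rw [inner3, inner3]
    ring
  rw [this]
  positivity

lemma upper {N : ℕ} (p : Fin N → S2) (s : Fin N → V) (hs : ∑ i, Pr (p i) (s i) = 0)
    (h1 : ∑ i, ∑ j, ⟪(p i : V), (p j : V)⟫ ^ 2 ≤ 4 / 9 * (N : ℝ) ^ 2) :
    ∑ i, ∑ j ∈ Finset.univ.erase i, ⟪s i, Cker (p i) (p j) (s j)⟫ ≤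
      1 / 3 * N * ∑ i, ‖s i‖ ^ 2 := by
  set A : Fin N → Fin N → ℝ := fun i j => ⟪Pr (p i) (s i), Pr (p j) (s j)⟫ with hA
  set Z : Fin N → Fin N → ℝ := fun i j =>
    ⟪(p i : V), (p j : V)⟫ * ⟪cr (p i) (s i), cr (p j) (s j)⟫ with hZ
  set Q : Fin N → Fin N → ℝ := fun i j =>
    |⟪(p i : V), (p j : V)⟫| * (‖s i‖ * ‖s j‖) with hQ
  have hterm : ∀ i j, ⟪s i, Cker (p i) (p j) (s j)⟫ ≤ A i j - 1 / 2 * Z i j + 1 / 2 * Q i j := by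
    intro i j
    have := (abs_le.mp (formC (p i) (p j) (s i) (s j))).2
    simp only [hA, hZ, hQ]
    linarith
  have hdiag : ∀ i, 0 ≤ A i i - 1 / 2 * Z i i := by
    intro i
    simp only [hA, hZ]
    rw [cr_cr, S2_self, Pr_inner, S2_self]
    have := real_inner_mul_inner_self_le (p i : V) (s i)
    rw [S2_self] at this
    linarith
  have hQ0 : ∀ i j, 0 ≤ Q i j := fun i j => by simp only [hQ]; positivity
  have hstep : ∀ i, ∑ j ∈ Finset.univ.erase i, ⟪s i, Cker (p i) (p j) (s j)⟫ ≤
      ∑ j, (A i j - 1 / 2 * Z i j + 1 / 2 * Q i j) := by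
    intro i
    refine (Finset.sum_le_sum fun j _ => hterm i j).trans ?_
    rw [← Finset.add_sum_erase Finset.univ _ (Finset.mem_univ i)]
    have := hdiag i
    have := hQ0 i i
    linarith
  have hAs : ∑ i, ∑ j, A i j = 0 := by
    have : ⟪∑ i, Pr (p i) (s i), ∑ i, Pr (p i) (s i)⟫ = ∑ i, ∑ j, A i j := by
      rw [sum_inner]
      simp only [inner_sum, hA]
    rw [← this, hs, inner_zero_left]
  have hZs : 0 ≤ ∑ i, ∑ j, Z i j := Zsum_nonneg p s
  have hQs : ∑ i, ∑ j, Q i j ≤ 2 / 3 * N * ∑ i, ‖s i‖ ^ 2 := by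
    apply le_of_sq_le_sq _ (by positivity)
    have hcs := Finset.sum_mul_sq_le_sq_mul_sq (Finset.univ : Finset (Fin N × Fin N))
      (fun q => |⟪(p q.1 : V), (p q.2 : V)⟫|) (fun q => ‖s q.1‖ * ‖s q.2‖)
    simp only [Fintype.sum_prod_type, sq_abs] at hcs
    have e2 : ∑ i, ∑ j, (‖s i‖ * ‖s j‖) ^ 2 = (∑ i, ‖s i‖ ^ 2) ^ 2 := by
      rw [sq (∑ i, ‖s i‖ ^ 2), Finset.sum_mul_sum]
      simp only [mul_pow]
    rw [e2] at hcs
    calc _ ≤ _ := hcs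
      _ ≤ 4 / 9 * (N : ℝ) ^ 2 * (∑ i, ‖s i‖ ^ 2) ^ 2 :=
        mul_le_mul_of_nonneg_right h1 (by positivity)
      _ = _ := by ring
  have := Finset.sum_le_sum fun i (_ : i ∈ Finset.univ) => hstep i
  simp only [Finset.sum_add_distrib, Finset.sum_sub_distrib, ← Finset.mul_sum] at this
  linarith

def hent (a b : Fin 3) (x y : S2) : ℝ :=
  cr x y a * cr x y b * (1 + ⟪(x : V), (y : V)⟫ ^ 2)
    - 1 / 3 * ((if a = b then 1 else 0) - (x : V) a * (x : V) b)

lemma Pr_norm (x : S2) (v : V) : ‖Pr x v‖ ^ 2 = ⟪v, v⟫ - ⟪(x : V), v⟫ ^ 2 := by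
  rw [← real_inner_self_eq_norm_sq, Pr_inner, S2_self]
  ring

lemma hent_form (x y : S2) (v : V) :
    ∑ a, ∑ b, v a * v b * hent a b x y =
      ⟪cr x y, v⟫ ^ 2 * (1 + ⟪(x : V), (y : V)⟫ ^ 2) - 1 / 3 * ‖Pr x v‖ ^ 2 := by
  rw [Pr_norm]
  simp only [hent, Fin.sum_univ_three]
  rw [inner3 (cr x y), inner3 v, inner3 (x : V) v]
  simp
  ring

lemma lower {N : ℕ} (hN : 0 < N) (p : Fin N → S2) (v : V) (hv : v ≠ 0)
    (h2 : ∀ a b, |∑ i, ∑ j, hent a b (p i) (p j) - (if a = b then 2 / 45 else 0) * (N : ℝ) ^ 2|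
      < 1 / 100 * (N : ℝ) ^ 2) :
    1 / 3 * N * ∑ i, ‖Pr (p i) v‖ ^ 2 <
    ∑ i, ∑ j ∈ Finset.univ.erase i, ⟪Pr (p i) v, Cker (p i) (p j) (Pr (p j) v)⟫ := by
  have hterm : ∀ x y : S2, ⟪Pr x v, Cker x y (Pr y v)⟫ = ⟪v, Cker x y v⟫ := by
    intro x y
    have e1 : ∀ z, ⟪Pr x v, Cker x y z⟫ = ⟪v, Cker x y z⟫ := by
      intro z
      rw [Pr_apply, inner_sub_left, real_inner_smul_left, Cker_plane_left]; ring
    rw [e1, Cker_symm, real_inner_comm, Pr_apply, inner_sub_left, real_inner_smul_left,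
      Cker_plane_right, real_inner_comm, ← Cker_symm]; ring
  simp only [hterm]
  have hG : ∑ i, ∑ j, ∑ a, ∑ b, v a * v b * hent a b (p i) (p j) =
      ∑ i, ∑ j, ⟪cr (p i) (p j), v⟫ ^ 2 * (1 + ⟪(p i : V), (p j : V)⟫ ^ 2)
        - 1 / 3 * N * ∑ i, ‖Pr (p i) v‖ ^ 2 := by
    simp only [hent_form, Finset.sum_sub_distrib]
    simp [Finset.mul_sum]
    refine Finset.sum_congr rfl fun i _ => ?_
    ring
  have hG2 : ∑ i, ∑ j, ∑ a, ∑ b, v a * v b * hent a b (p i) (p j) =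
      ∑ a, ∑ b, v a * v b * ∑ i, ∑ j, hent a b (p i) (p j) := by
    simp only [Fin.sum_univ_three, Finset.mul_sum, ← Finset.sum_add_distrib]
  have hpos : 0 < ∑ a, ∑ b, v a * v b * ∑ i, ∑ j, hent a b (p i) (p j) := by
    have hvv : 0 < ⟪v, v⟫ := real_inner_self_pos.mpr hv
    rw [inner3] at hvv
    have hNN : (0:ℝ) < (N : ℝ) ^ 2 := by positivity
    have hb : ∀ a b, v a * v b * ((if a = b then 2 / 45 else 0) * (N : ℝ) ^ 2)
        - (v a ^ 2 + v b ^ 2) / 2 * (1 / 100 * (N : ℝ) ^ 2) ≤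
        v a * v b * ∑ i, ∑ j, hent a b (p i) (p j) := by
      intro a b
      have h3 := (h2 a b).le
      set X := ∑ i, ∑ j, hent a b (p i) (p j)
      set c := (if a = b then (2:ℝ) / 45 else 0) * (N : ℝ) ^ 2
      have h4 : |v a * v b * (X - c)| ≤ (v a ^ 2 + v b ^ 2) / 2 * (1 / 100 * (N : ℝ) ^ 2) := by
        rw [abs_mul]
        refine mul_le_mul ?_ h3 (abs_nonneg _) (by positivity)
        rw [abs_le]
        constructor <;> nlinarith [sq_nonneg (v a + v b), sq_nonneg (v a - v b)]
      have := (abs_le.mp h4).1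
      linarith
    refine lt_of_lt_of_le ?_ (Finset.sum_le_sum fun a _ => Finset.sum_le_sum fun b _ => hb a b)
    simp [Fin.sum_univ_three]
    nlinarith [mul_pos hvv hNN]
  have hle : ∑ i, ∑ j, ⟪cr (p i) (p j), v⟫ ^ 2 * (1 + ⟪(p i : V), (p j : V)⟫ ^ 2) ≤
      ∑ i, ∑ j ∈ Finset.univ.erase i, ⟪v, Cker (p i) (p j) v⟫ := by
    refine Finset.sum_le_sum fun i _ => ?_
    rw [← Finset.add_sum_erase Finset.univ _ (Finset.mem_univ i)]
    have h0 : ⟪cr (p i) (p i), v⟫ = 0 := by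
      simp only [inner3, cr]; simp; ring
    rw [h0]
    have := Finset.sum_le_sum fun j (_ : j ∈ Finset.univ.erase i) => formA (p i) (p j) v
    linarith
  linarith

lemma CN_form {N : ℕ} (p : Fin N → S2) (s s' : Fin N → V) :
    ∑ i, ⟪CN N p s i, s' i⟫ =
      (N : ℝ)⁻¹ * ∑ i, ∑ j ∈ Finset.univ.erase i, ⟪s' i, Cker (p i) (p j) (s j)⟫ := by
  rw [Finset.mul_sum]
  refine Finset.sum_congr rfl fun i _ => ?_
  simp only [CN, LinearMap.pi_apply, LinearMap.smul_apply, LinearMap.sum_apply,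
    LinearMap.comp_apply, LinearMap.proj_apply]
  rw [real_inner_smul_left, real_inner_comm, inner_sum]

lemma CN_symm {N : ℕ} (p : Fin N → S2) (s s' : Fin N → V) :
    ∑ i, ⟪CN N p s i, s' i⟫ = ∑ i, ⟪s i, CN N p s' i⟫ := by
  have h : ∑ i, ⟪s i, CN N p s' i⟫ = ∑ i, ⟪CN N p s' i, s i⟫ :=
    Finset.sum_congr rfl fun i _ => real_inner_comm _ _
  rw [h, CN_form, CN_form]
  congr 1
  have e : ∀ f : Fin N → Fin N → ℝ, ∑ i, ∑ j ∈ Finset.univ.erase i, f i j =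
      ∑ i, ∑ j, if j = i then 0 else f i j := by
    intro f
    refine Finset.sum_congr rfl fun i _ => ?_
    rw [← Finset.add_sum_erase Finset.univ _ (Finset.mem_univ i)]
    simp only [if_true, zero_add]
    refine Finset.sum_congr rfl fun j hj => ?_
    rw [if_neg (Finset.ne_of_mem_erase hj)]
  rw [e, e, Finset.sum_comm]
  refine Finset.sum_congr rfl fun i _ => Finset.sum_congr rfl fun j _ => ?_
  simp only [eq_comm (a := i) (b := j)]
  split_ifs
  · rfl
  · rw [Cker_symm, real_inner_comm, Cker_comm]

theorem det_main {N : ℕ} (hN : 0 < N) (p : Fin N → S2)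
    (h1 : ∑ i, ∑ j, ⟪(p i : V), (p j : V)⟫ ^ 2 ≤ 4 / 9 * (N : ℝ) ^ 2)
    (h2 : ∀ a b, |∑ i, ∑ j, hent a b (p i) (p j) - (if a = b then 2 / 45 else 0) * (N : ℝ) ^ 2|
      < 1 / 100 * (N : ℝ) ^ 2) :
    Module.finrank ℝ (VN N p) = 3 := by
  have hN' : (0:ℝ) < N := by exact_mod_cast hN
  let e : (Fin N → V) ≃ₗ[ℝ] PiLp 2 (fun _ : Fin N => V) :=
    (WithLp.linearEquiv 2 ℝ (Fin N → V)).symm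
  unfold VN
  rw [finrank_transfer e (CN N p) (1 / 3)]
  have hin : ∀ s s' : PiLp 2 (fun _ : Fin N => V), ⟪s, s'⟫ = ∑ i, ⟪s i, s' i⟫ :=
    fun s s' => PiLp.inner_apply _ _
  have hnorm : ∀ s : PiLp 2 (fun _ : Fin N => V), ‖s‖ ^ 2 = ∑ i, ‖s i‖ ^ 2 :=
    fun s => PiLp.norm_sq_eq_of_L2 _ _
  have hT : ∀ s i, (e.toLinearMap ∘ₗ CN N p ∘ₗ e.symm.toLinearMap) s i
      = CN N p (fun i => s i) i := fun s i => rfl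
  refine finrank_spec _ ?_ (1 / 3)
    ((∑ i, Pr (p i) ∘ₗ LinearMap.proj i) ∘ₗ e.symm.toLinearMap)
    (e.toLinearMap ∘ₗ LinearMap.pi fun i => Pr (p i)) ?_ ?_
  · intro s s'
    rw [hin, hin]
    simp only [hT]
    exact CN_symm p _ _
  · intro s hs
    have hs' : ∑ i, Pr (p i) (s i) = 0 := by
      have h3 := hs
      simp [LinearMap.sum_apply] at h3
      exact h3
    have := upper p (fun i => s i) hs' h1
    rw [hin, hnorm]
    simp only [hT]
    rw [CN_form, inv_mul_le_iff₀ hN']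
    linarith
  · intro v hv
    have := lower hN p v hv h2
    rw [hin, hnorm]
    simp only [hT]
    rw [CN_form, lt_inv_mul_iff₀ hN']
    have hJ : ∀ i, ((e.toLinearMap ∘ₗ LinearMap.pi fun i => Pr (p i)) v) i = Pr (p i) v :=
      fun i => rfl
    simp only [hJ]
    linarith
section ustat
open ProbabilityTheory
variable {X : Type*} [MeasurableSpace X] (μ : Measure X) [IsProbabilityMeasure μ]

lemma law_pair {N : ℕ} (i j : Fin N) (hij : i ≠ j) (g : X → X → ℝ)
    (hg : Measurable (Function.uncurry g)) :
    ∫ p, g (p i) (p j) ∂(Measure.pi fun _ : Fin N => μ) = ∫ z, g z.1 z.2 ∂(μ.prod μ) := by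
  have hI : iIndepFun (fun (i : Fin N) (p : Fin N → X) => p i) (Measure.pi fun _ => μ) :=
    iIndepFun_pi (X := fun _ => id) (fun _ => aemeasurable_id)
  have h2 := hI.indepFun hij
  rw [indepFun_iff_map_prod_eq_prod_map_map (measurable_pi_apply i).aemeasurable
    (measurable_pi_apply j).aemeasurable] at h2
  have e : ∀ k, Measure.map (fun p : Fin N → X => p k) (Measure.pi fun _ => μ) = μ :=
    fun k => (measurePreserving_eval (fun _ : Fin N => μ) k).map_eq
  rw [e, e] at h2
  rw [← h2, integral_map (by fun_prop)]
  exact hg.aestronglyMeasurable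

lemma int_bdd {Y : Type*} [MeasurableSpace Y] (P : Measure Y) [IsProbabilityMeasure P]
    (f : Y → ℝ) (hf : Measurable f) (K : ℝ) (hK : ∀ y, |f y| ≤ K) : Integrable f P :=
  Integrable.of_bound hf.aestronglyMeasurable K (Filter.Eventually.of_forall hK)

lemma cross {N : ℕ} (i j k l : Fin N) (hij : i ≠ j)
    (hik : i ≠ k) (hil : i ≠ l) (hjk : j ≠ k) (hjl : j ≠ l) (g : X → X → ℝ)
    (hg : Measurable (Function.uncurry g))
    (h0 : ∫ z, g z.1 z.2 ∂(μ.prod μ) = 0) :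
    ∫ p, g (p i) (p j) * g (p k) (p l) ∂(Measure.pi fun _ : Fin N => μ) = 0 := by
  have hI : iIndepFun (fun (i : Fin N) (p : Fin N → X) => p i) (Measure.pi fun _ => μ) :=
    iIndepFun_pi (X := fun _ => id) (fun _ => aemeasurable_id)
  have h2 := hI.indepFun_prodMk_prodMk (fun i => by fun_prop) i j k l hik hil hjk hjl
  have h3 := h2.comp hg hg
  have h4 := h3.integral_fun_mul_eq_mul_integral
    (hg.comp (by fun_prop)).aestronglyMeasurable (hg.comp (by fun_prop)).aestronglyMeasurable
  simp only [Function.comp_def, Function.uncurry] at h4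
  rw [h4, law_pair μ i j hij g hg, h0, zero_mul]

lemma second_moment {N : ℕ} (g : X → X → ℝ)
    (hg : Measurable (Function.uncurry g)) (K : ℝ) (hK : ∀ x y, |g x y| ≤ K)
    (h0 : ∫ z, g z.1 z.2 ∂(μ.prod μ) = 0) :
    ∫ p, (∑ i, ∑ j, g (p i) (p j)) ^ 2 ∂(Measure.pi fun _ : Fin N => μ) ≤
      6 * K ^ 2 * (N : ℝ) ^ 3 := by
  have hmeas : ∀ i j : Fin N, Measurable fun p : Fin N → X => g (p i) (p j) := fun i j =>
    hg.comp (f := fun p : Fin N → X => (p i, p j)) (by fun_prop)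
  have hprod : ∀ (i j k l : Fin N) (p : Fin N → X), |g (p i) (p j) * g (p k) (p l)| ≤ K ^ 2 := by
    intro i j k l p
    rw [abs_mul, sq]
    exact mul_le_mul (hK _ _) (hK _ _) (abs_nonneg _) ((abs_nonneg _).trans (hK (p i) (p j)))
  have hint : ∀ i j k l : Fin N, Integrable (fun p : Fin N → X => g (p i) (p j) * g (p k) (p l))
      (Measure.pi fun _ : Fin N => μ) := fun i j k l =>
    int_bdd _ _ ((hmeas i j).mul (hmeas k l)) (K ^ 2) (hprod i j k l)
  have hexp : ∀ p : Fin N → X, (∑ i, ∑ j, g (p i) (p j)) ^ 2 =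
      ∑ i, ∑ j, ∑ k, ∑ l, g (p i) (p j) * g (p k) (p l) := by
    intro p
    rw [sq, Finset.sum_mul]
    refine Finset.sum_congr rfl fun i _ => ?_
    rw [Finset.sum_mul]
    refine Finset.sum_congr rfl fun j _ => ?_
    rw [Finset.mul_sum]
    refine Finset.sum_congr rfl fun k _ => ?_
    rw [Finset.mul_sum]
  simp only [hexp]
  rw [integral_finsetSum _ fun i _ => integrable_finsetSum _ fun j _ =>
    integrable_finsetSum _ fun k _ => integrable_finsetSum _ fun l _ => hint i j k l]
  have e1 : ∀ i : Fin N, ∫ p, ∑ j, ∑ k, ∑ l, g (p i) (p j) * g (p k) (p l)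
      ∂(Measure.pi fun _ : Fin N => μ) = ∑ j, ∑ k, ∑ l, ∫ p, g (p i) (p j) * g (p k) (p l)
      ∂(Measure.pi fun _ : Fin N => μ) := by
    intro i
    rw [integral_finsetSum _ fun j _ =>
      integrable_finsetSum _ fun k _ => integrable_finsetSum _ fun l _ => hint i j k l]
    refine Finset.sum_congr rfl fun j _ => ?_
    rw [integral_finsetSum _ fun k _ => integrable_finsetSum _ fun l _ => hint i j k l]
    refine Finset.sum_congr rfl fun k _ => ?_
    rw [integral_finsetSum _ fun l _ => hint i j k l]
  simp only [e1]
  have hb : ∀ i j k l : Fin N, ∫ p, g (p i) (p j) * g (p k) (p l)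
      ∂(Measure.pi fun _ : Fin N => μ) ≤ K ^ 2 * ((if i = j then 1 else 0) +
        (if i = k then 1 else 0) + (if i = l then 1 else 0) + (if j = k then 1 else 0)
        + (if j = l then 1 else 0)) := by
    intro i j k l
    by_cases hc : i ≠ j ∧ i ≠ k ∧ i ≠ l ∧ j ≠ k ∧ j ≠ l
    · obtain ⟨a1, a2, a3, a4, a5⟩ := hc
      rw [cross μ i j k l a1 a2 a3 a4 a5 g hg h0]
      positivity
    · have hone : (1:ℝ) ≤ ((if i = j then 1 else 0) +
        (if i = k then 1 else 0) + (if i = l then 1 else 0) + (if j = k then 1 else 0)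
        + (if j = l then 1 else 0)) := by
        split_ifs <;> first | (exfalso; tauto) | norm_num
      have hle : ∫ p, g (p i) (p j) * g (p k) (p l) ∂(Measure.pi fun _ : Fin N => μ) ≤
          ∫ p, K ^ 2 ∂(Measure.pi fun _ : Fin N => μ) :=
        integral_mono (hint i j k l) (integrable_const _) fun p => (abs_le.mp (hprod i j k l p)).2
      simp at hle
      nlinarith [sq_nonneg K]
  refine (Finset.sum_le_sum fun i _ => Finset.sum_le_sum fun j _ => Finset.sum_le_sum fun k _ =>
    Finset.sum_le_sum fun l _ => hb i j k l).trans ?_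
  simp only [← Finset.mul_sum, Finset.sum_add_distrib]
  simp
  nlinarith [mul_nonneg (sq_nonneg K) (by positivity : (0:ℝ) ≤ (N:ℝ) ^ 3)]

lemma ustat (h : X → X → ℝ) (hm : Measurable (Function.uncurry h)) (M : ℝ)
    (hM : ∀ x y, |h x y| ≤ M) (m : ℝ) (hmean : ∫ z, h z.1 z.2 ∂(μ.prod μ) = m)
    (ε : ℝ) (hε : 0 < ε) :
    Filter.Tendsto (fun N : ℕ => (Measure.pi fun _ : Fin N => μ)
      {p | ε * (N : ℝ) ^ 2 ≤ |∑ i, ∑ j, h (p i) (p j) - m * (N : ℝ) ^ 2|})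
      Filter.atTop (nhds 0) := by
  set g : X → X → ℝ := fun x y => h x y - m with hgdef
  have hg : Measurable (Function.uncurry g) := hm.sub measurable_const
  have hK : ∀ x y, |g x y| ≤ M + |m| := fun x y =>
    (abs_sub _ _).trans (add_le_add (hM x y) le_rfl)
  have hint : Integrable (fun z : X × X => h z.1 z.2) (μ.prod μ) :=
    int_bdd _ _ hm M fun z => hM _ _
  have h0 : ∫ z, g z.1 z.2 ∂(μ.prod μ) = 0 := by
    simp only [hgdef]
    rw [integral_sub hint (integrable_const _), hmean]
    simp
  have hbound : ∀ N : ℕ, 0 < N → (Measure.pi fun _ : Fin N => μ)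
      {p | ε * (N : ℝ) ^ 2 ≤ |∑ i, ∑ j, h (p i) (p j) - m * (N : ℝ) ^ 2|} ≤
      ENNReal.ofReal (6 * (M + |m|) ^ 2 / ε ^ 2 * (N : ℝ)⁻¹) := by
    intro N hN
    have hN' : (0:ℝ) < N := by exact_mod_cast hN
    have hS : ∀ p : Fin N → X, ∑ i, ∑ j, h (p i) (p j) - m * (N : ℝ) ^ 2 =
        ∑ i, ∑ j, g (p i) (p j) := by
      intro p
      simp [hgdef, Finset.sum_sub_distrib]
      ring
    simp only [hS]
    have hmeas : Measurable fun p : Fin N → X => ∑ i, ∑ j, g (p i) (p j) :=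
      Finset.measurable_sum _ fun i _ => Finset.measurable_sum _ fun j _ =>
        hg.comp (f := fun p : Fin N → X => (p i, p j)) (by fun_prop)
    have hmk := mul_meas_ge_le_integral_of_nonneg (μ := Measure.pi fun _ : Fin N => μ)
      (f := fun p : Fin N → X => (∑ i, ∑ j, g (p i) (p j)) ^ 2)
      (Filter.Eventually.of_forall fun p => sq_nonneg _)
      (by
        refine int_bdd _ _ (hmeas.pow_const 2) ((∑ i : Fin N, ∑ j : Fin N, (M + |m|)) ^ 2) ?_
        intro p
        rw [abs_pow]
        refine pow_le_pow_left₀ (abs_nonneg _) ?_ 2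
        refine (Finset.abs_sum_le_sum_abs _ _).trans (Finset.sum_le_sum fun i _ => ?_)
        refine (Finset.abs_sum_le_sum_abs _ _).trans (Finset.sum_le_sum fun j _ => hK _ _))
      ((ε * (N : ℝ) ^ 2) ^ 2)
    have hsm := second_moment μ (N := N) g hg _ hK h0
    have hset : {p : Fin N → X | ε * (N : ℝ) ^ 2 ≤ |∑ i, ∑ j, g (p i) (p j)|} =
        {p | (ε * (N : ℝ) ^ 2) ^ 2 ≤ (∑ i, ∑ j, g (p i) (p j)) ^ 2} := by
      ext p
      simp only [Set.mem_ofPred_eq]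
      rw [sq_le_sq, abs_of_nonneg (by positivity : 0 ≤ ε * (N : ℝ) ^ 2)]
    rw [hset, ← ENNReal.ofReal_toReal (measure_ne_top _ _)]
    apply ENNReal.ofReal_le_ofReal
    have h5 := hmk.trans hsm
    rw [measureReal_def] at h5
    have h6 : 6 * (M + |m|) ^ 2 / ε ^ 2 * (N : ℝ)⁻¹ =
        6 * (M + |m|) ^ 2 * (N : ℝ) ^ 3 / (ε * (N : ℝ) ^ 2) ^ 2 := by
      field_simp
    rw [h6, le_div_iff₀ (by positivity), mul_comm]
    exact h5
  have hlim : Filter.Tendsto (fun N : ℕ => ENNReal.ofReal (6 * (M + |m|) ^ 2 / ε ^ 2 * (N : ℝ)⁻¹))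
      Filter.atTop (nhds 0) := by
    have := (tendsto_inv_atTop_nhds_zero_nat (𝕜 := ℝ)).const_mul (6 * (M + |m|) ^ 2 / ε ^ 2)
    rw [mul_zero] at this
    simpa using ENNReal.tendsto_ofReal this
  refine tendsto_of_tendsto_of_tendsto_of_le_of_le' tendsto_const_nhds hlim
    (Filter.Eventually.of_forall fun _ => bot_le) ?_
  filter_upwards [Filter.eventually_gt_atTop 0] with N hN
  exact hbound N hN
end ustat
section moments

lemma intc {Y : Type*} [TopologicalSpace Y] [CompactSpace Y] [MeasurableSpace Y]
    [OpensMeasurableSpace Y] (P : Measure Y) [IsProbabilityMeasure P]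
    (f : Y → ℝ) (hf : Continuous f) : Integrable f P := by
  obtain ⟨K, hK⟩ := (isCompact_range hf).isBounded.exists_norm_le
  exact int_bdd P f hf.measurable K fun y => hK _ ⟨y, rfl⟩

lemma exists_rot (v v' : V) (h : ‖v‖ = ‖v'‖) : ∃ g : V ≃ₗᵢ[ℝ] V, g v = v' :=
  ⟨(ℝ ∙ (v - v'))ᗮ.reflection, Submodule.reflection_sub h⟩

lemma sphereMap_coe (g : V ≃ₗᵢ[ℝ] V) (x : S2) : ((sphereMap g x : S2) : V) = g x := rfl

lemma pow_inv (μ : Measure S2) [IsProbabilityMeasure μ]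
    (hμ : ∀ g : V ≃ₗᵢ[ℝ] V, MeasurePreserving (sphereMap g) μ μ) (n : ℕ) (v v' : V) (h : ‖v‖ = ‖v'‖) :
    ∫ x : S2, ⟪v, (x : V)⟫ ^ n ∂μ = ∫ x : S2, ⟪v', (x : V)⟫ ^ n ∂μ := by
  obtain ⟨g, hg⟩ := exists_rot v v' h
  have hc : Continuous fun x : S2 => ⟪v', (x : V)⟫ ^ n := by fun_prop
  conv_rhs => rw [← (hμ g).map_eq]
  rw [integral_map (hμ g).measurable.aemeasurable hc.aestronglyMeasurable]
  simp only [sphereMap_coe, ← hg, LinearIsometryEquiv.inner_map_map]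

def ee (a : Fin 3) : V := EuclideanSpace.single a 1

lemma ee_inner (a : Fin 3) (x : V) : ⟪ee a, x⟫ = x a := by
  rw [ee, EuclideanSpace.inner_single_left]; simp

lemma ee_norm (a : Fin 3) : ‖ee a‖ = 1 := by simp [ee]

lemma S2_coord (x : S2) : (x : V) 0 ^ 2 + (x : V) 1 ^ 2 + (x : V) 2 ^ 2 = 1 := by
  have := S2_self x
  rw [inner3] at this
  linarith

lemma moment2 (μ : Measure S2) [IsProbabilityMeasure μ]
    (hμ : ∀ g : V ≃ₗᵢ[ℝ] V, MeasurePreserving (sphereMap g) μ μ) (v : V) (hv : ‖v‖ = 1) : ∫ x : S2, ⟪v, (x : V)⟫ ^ 2 ∂μ = 1 / 3 := by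
  have h : ∀ a, ∫ x : S2, ((x : V) a) ^ 2 ∂μ = ∫ x : S2, ⟪v, (x : V)⟫ ^ 2 ∂μ := by
    intro a
    rw [pow_inv μ hμ 2 v (ee a) (by rw [hv, ee_norm])]
    simp only [ee_inner]
  have hs : ∫ x : S2, ((x : V) 0 ^ 2 + (x : V) 1 ^ 2 + (x : V) 2 ^ 2) ∂μ = 1 := by
    simp only [S2_coord]
    simp
  rw [integral_add (intc _ _ (by fun_prop)) (intc _ _ (by fun_prop)),
    integral_add (intc _ _ (by fun_prop)) (intc _ _ (by fun_prop)), h, h, h] at hs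
  linarith

lemma norm_sq3 (v : V) : ‖v‖ ^ 2 = v 0 ^ 2 + v 1 ^ 2 + v 2 ^ 2 := by
  rw [← real_inner_self_eq_norm_sq, inner3]; ring

lemma moment4 (μ : Measure S2) [IsProbabilityMeasure μ]
    (hμ : ∀ g : V ≃ₗᵢ[ℝ] V, MeasurePreserving (sphereMap g) μ μ) (v : V) (hv : ‖v‖ = 1) : ∫ x : S2, ⟪v, (x : V)⟫ ^ 4 ∂μ = 1 / 5 := by
  have h : ∀ a, ∫ x : S2, ((x : V) a) ^ 4 ∂μ = ∫ x : S2, ⟪v, (x : V)⟫ ^ 4 ∂μ := by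
    intro a
    rw [pow_inv μ hμ 4 v (ee a) (by rw [hv, ee_norm])]
    simp only [ee_inner]
  set A := ∫ x : S2, ⟪v, (x : V)⟫ ^ 4 ∂μ with hA
  have hB : ∀ a b : Fin 3, a ≠ b → ∫ x : S2, (x : V) a ^ 2 * (x : V) b ^ 2 ∂μ = A / 3 := by
    intro a b hab
    have hab0 : ⟪ee a, ee b⟫ = 0 := by rw [ee_inner]; simp [ee, hab]
    have hba0 : ⟪ee b, ee a⟫ = 0 := by rw [real_inner_comm, hab0]
    have haa : ∀ c, ⟪ee c, ee c⟫ = 1 := by intro c; rw [ee_inner]; simp [ee]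
    have hn : ∀ c d : ℝ, c ^ 2 + d ^ 2 = 25 → ‖(5 : ℝ) • ee a‖ = ‖c • ee a + d • ee b‖ := by
      intro c d hcd
      rw [← sq_eq_sq₀ (norm_nonneg _) (norm_nonneg _), ← real_inner_self_eq_norm_sq,
        ← real_inner_self_eq_norm_sq]
      simp only [inner_add_left, inner_add_right, real_inner_smul_left, real_inner_smul_right,
        hab0, hba0, haa]
      linarith
    have h1 := pow_inv μ hμ 4 _ _ (hn 3 4 (by norm_num))
    have h2 := pow_inv μ hμ 4 _ _ (hn 3 (-4) (by norm_num))
    simp only [inner_add_left, real_inner_smul_left, ee_inner] at h1 h2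
    have h3 : ∫ x : S2, (5 * (x : V) a) ^ 4 ∂μ = 625 * A := by
      rw [← h a, ← integral_const_mul]
      congr 1; ext x; ring
    have h4 : ∫ x : S2, (3 * (x : V) a + 4 * (x : V) b) ^ 4 ∂μ
        + ∫ x : S2, (3 * (x : V) a + -4 * (x : V) b) ^ 4 ∂μ =
        162 * ∫ x : S2, (x : V) a ^ 4 ∂μ + 512 * ∫ x : S2, (x : V) b ^ 4 ∂μ
        + 1728 * ∫ x : S2, (x : V) a ^ 2 * (x : V) b ^ 2 ∂μ := by
      rw [← integral_const_mul, ← integral_const_mul, ← integral_const_mul,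
        ← integral_add (intc _ _ (by fun_prop)) (intc _ _ (by fun_prop)),
        ← integral_add (intc _ _ (by fun_prop)) (intc _ _ (by fun_prop)),
        ← integral_add (intc _ _ (by fun_prop)) (intc _ _ (by fun_prop))]
      congr 1; ext x; ring
    rw [← h1, ← h2, h3, h, h] at h4
    linarith
  have hs : ∫ x : S2, ((x : V) 0 ^ 4 + (x : V) 0 ^ 2 * (x : V) 1 ^ 2
      + (x : V) 0 ^ 2 * (x : V) 2 ^ 2) ∂μ = 1 / 3 := by
    rw [← moment2 μ hμ (ee 0) (ee_norm 0)]
    congr 1; ext x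
    rw [ee_inner]
    linear_combination (x : V) 0 ^ 2 * S2_coord x
  rw [integral_add (intc _ _ (by fun_prop)) (intc _ _ (by fun_prop)),
    integral_add (intc _ _ (by fun_prop)) (intc _ _ (by fun_prop)), h,
    hB 0 1 (by decide), hB 0 2 (by decide)] at hs
  linarith

lemma S2_norm (x : S2) : ‖(x : V)‖ = 1 := mem_sphere_zero_iff_norm.mp x.2

lemma Et2 (μ : Measure S2) [IsProbabilityMeasure μ]
    (hμ : ∀ g : V ≃ₗᵢ[ℝ] V, MeasurePreserving (sphereMap g) μ μ) : ∫ z : S2 × S2, ⟪(z.1 : V), (z.2 : V)⟫ ^ 2 ∂(μ.prod μ) = 1 / 3 := by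
  rw [integral_prod _ (intc _ _ (by fun_prop))]
  have : ∀ x : S2, ∫ y : S2, ⟪(x : V), (y : V)⟫ ^ 2 ∂μ = 1 / 3 := fun x =>
    moment2 μ hμ _ (S2_norm x)
  simp [this]

lemma Et4 (μ : Measure S2) [IsProbabilityMeasure μ]
    (hμ : ∀ g : V ≃ₗᵢ[ℝ] V, MeasurePreserving (sphereMap g) μ μ) : ∫ z : S2 × S2, ⟪(z.1 : V), (z.2 : V)⟫ ^ 4 ∂(μ.prod μ) = 1 / 5 := by
  rw [integral_prod _ (intc _ _ (by fun_prop))]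
  have : ∀ x : S2, ∫ y : S2, ⟪(x : V), (y : V)⟫ ^ 4 ∂μ = 1 / 5 := fun x =>
    moment4 μ hμ _ (S2_norm x)
  simp [this]

def Hv (v : V) (z : S2 × S2) : ℝ :=
  (⟪v, v⟫ * (1 - ⟪(z.1 : V), (z.2 : V)⟫ ^ 2) - ⟪(z.1 : V), v⟫ ^ 2 - ⟪(z.2 : V), v⟫ ^ 2
    + 2 * ⟪(z.1 : V), (z.2 : V)⟫ * ⟪(z.1 : V), v⟫ * ⟪(z.2 : V), v⟫)
    * (1 + ⟪(z.1 : V), (z.2 : V)⟫ ^ 2) - 1 / 3 * (⟪v, v⟫ - ⟪(z.1 : V), v⟫ ^ 2)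

lemma Hv_cont (v : V) : Continuous (Hv v) := by
  unfold Hv; fun_prop

lemma Hv_eq (v : V) (z : S2 × S2) : Hv v z =
    ⟪cr z.1 z.2, v⟫ ^ 2 * (1 + ⟪(z.1 : V), (z.2 : V)⟫ ^ 2)
      - 1 / 3 * (⟪v, v⟫ - ⟪(z.1 : V), v⟫ ^ 2) := by
  have := gram z.1 z.2 v v
  rw [S2_self, S2_self] at this
  rw [Hv]
  linear_combination -(1 + ⟪(z.1 : V), (z.2 : V)⟫ ^ 2) * this

lemma Hv_inv (μ : Measure S2) [IsProbabilityMeasure μ]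
    (hμ : ∀ g : V ≃ₗᵢ[ℝ] V, MeasurePreserving (sphereMap g) μ μ) (v v' : V) (h : ‖v‖ = ‖v'‖) :
    ∫ z, Hv v z ∂(μ.prod μ) = ∫ z, Hv v' z ∂(μ.prod μ) := by
  obtain ⟨g, hg⟩ := exists_rot v v' h
  have hp := (hμ g).prod (hμ g)
  conv_rhs => rw [← hp.map_eq]
  rw [integral_map hp.measurable.aemeasurable (Hv_cont v').aestronglyMeasurable]
  congr 1; ext z
  simp only [Hv, Prod.map_fst, Prod.map_snd, sphereMap_coe, ← hg,
    LinearIsometryEquiv.inner_map_map]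

lemma ee_ee (a b : Fin 3) : ⟪ee a, ee b⟫ = if a = b then 1 else 0 := by
  rw [ee_inner]; simp [ee, Pi.single_apply]

lemma inner_ee (a : Fin 3) (x : V) : ⟪x, ee a⟫ = x a := by
  rw [real_inner_comm, ee_inner]

lemma hent_cont (a b : Fin 3) : Continuous fun z : S2 × S2 => hent a b z.1 z.2 := by
  unfold hent
  have hcr : ∀ a, Continuous fun z : S2 × S2 => cr z.1 z.2 a := by
    intro a
    fin_cases a <;> simp [cr] <;> fun_prop
  have := hcr a
  have := hcr b
  fun_prop

lemma hent_mean (μ : Measure S2) [IsProbabilityMeasure μ]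
    (hμ : ∀ g : V ≃ₗᵢ[ℝ] V, MeasurePreserving (sphereMap g) μ μ) (a b : Fin 3) :
    ∫ z, hent a b z.1 z.2 ∂(μ.prod μ) = if a = b then 2 / 45 else 0 := by
  by_cases hab : a = b
  · subst hab
    rw [if_pos rfl]
    have h1 : ∀ c, (fun z : S2 × S2 => hent c c z.1 z.2) = Hv (ee c) := by
      intro c; ext z
      rw [Hv_eq, ee_ee, inner_ee, inner_ee, hent, if_pos rfl]
      ring
    have h2 : ∀ c, ∫ z, Hv (ee c) z ∂(μ.prod μ) = ∫ z, Hv (ee a) z ∂(μ.prod μ) := fun c =>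
      Hv_inv μ hμ _ _ (by rw [ee_norm, ee_norm])
    rw [h1]
    have h3 : ∫ z, (Hv (ee 0) z + Hv (ee 1) z + Hv (ee 2) z) ∂(μ.prod μ) = 2 / 15 := by
      have e : ∀ z, Hv (ee 0) z + Hv (ee 1) z + Hv (ee 2) z =
          1 / 3 - ⟪(z.1 : V), (z.2 : V)⟫ ^ 4 := by
        intro z
        simp only [Hv_eq, ee_ee, if_true]
        simp only [inner_ee]
        have g1 := cr_cr z.1 z.1 z.2 z.2
        rw [S2_self, S2_self, inner3 (cr (z.1 : V) (z.2 : V))] at g1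
        have g2 := S2_coord z.1
        linear_combination (1 + ⟪(z.1 : V), (z.2 : V)⟫ ^ 2) * g1 + 1 / 3 * g2
      simp only [e]
      rw [integral_sub (integrable_const _) (intc _ _ (by fun_prop)), Et4 μ hμ]
      simp
      norm_num
    rw [integral_add (intc _ (fun z => Hv (ee 0) z + Hv (ee 1) z) ((Hv_cont _).add (Hv_cont _))) (intc _ _ (Hv_cont _)),
      integral_add (intc _ _ (Hv_cont _)) (intc _ _ (Hv_cont _)), h2 0, h2 1, h2 2] at h3
    linarith
  · rw [if_neg hab]
    have hn : ‖ee a + ee b‖ = ‖ee a - ee b‖ := by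
      rw [← sq_eq_sq₀ (norm_nonneg _) (norm_nonneg _), ← real_inner_self_eq_norm_sq,
        ← real_inner_self_eq_norm_sq]
      simp only [inner_add_left, inner_add_right, inner_sub_left, inner_sub_right, ee_ee,
        if_neg hab, if_neg (Ne.symm hab)]
      simp
    have h1 := Hv_inv μ hμ _ _ hn
    have h2 : ∀ z : S2 × S2, hent a b z.1 z.2 = 1 / 4 * (Hv (ee a + ee b) z - Hv (ee a - ee b) z) := by
      intro z
      simp only [Hv_eq, hent, if_neg hab, inner_add_left, inner_add_right, inner_sub_left,
        inner_sub_right, ee_ee, if_neg (Ne.symm hab), if_true]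
      simp only [inner_ee]
      ring
    simp only [h2]
    rw [integral_const_mul, integral_sub (intc _ _ (Hv_cont _)) (intc _ _ (Hv_cont _)), h1]
    simp
end moments

lemma ustat_cont (μ : Measure S2) [IsProbabilityMeasure μ] (h : S2 → S2 → ℝ)
    (hc : Continuous fun z : S2 × S2 => h z.1 z.2) (m : ℝ)
    (hmean : ∫ z, h z.1 z.2 ∂(μ.prod μ) = m) (ε : ℝ) (hε : 0 < ε) :
    Filter.Tendsto (fun N : ℕ => (Measure.pi fun _ : Fin N => μ)
      {p | ε * (N : ℝ) ^ 2 ≤ |∑ i, ∑ j, h (p i) (p j) - m * (N : ℝ) ^ 2|})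
      Filter.atTop (nhds 0) := by
  obtain ⟨K, hK⟩ := (isCompact_range hc).isBounded.exists_norm_le
  exact ustat μ h hc.measurable K (fun x y => hK _ ⟨(x, y), rfl⟩) m hmean ε hε

/-- Let `x₁, …, x_N` be independent random points distributed uniformly on
the sphere (i.e. distributed according to the product of `N` copies of the rotation
invariant probability measure `μ`).  Then the probability that `dim 𝕍_N = 3` tends to `1`
as `N → ∞`. -/
theorem intrinsic_reconstitution_admissibility
    (μ : Measure S2) [IsProbabilityMeasure μ]
    (hμ : ∀ g : V ≃ₗᵢ[ℝ] V, MeasurePreserving (sphereMap g) μ μ) :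
    Filter.Tendsto
      (fun N : ℕ =>
        (Measure.pi fun _ : Fin N => μ)
          {p : Fin N → S2 | Module.finrank ℝ (VN N p) = 3})
      Filter.atTop (nhds 1) := by

  have hT := ustat_cont μ (fun x y => ⟪(x : V), (y : V)⟫ ^ 2) (by fun_prop) _ (Et2 μ hμ)
    (1 / 9) (by norm_num)
  have hH := fun a b => ustat_cont μ (hent a b) (hent_cont a b) _ (hent_mean μ hμ a b)
    (1 / 100) (by norm_num)
  have hsum := hT.add (tendsto_finsetSum Finset.univ fun a (_ : a ∈ Finset.univ) =>
    tendsto_finsetSum Finset.univ fun b (_ : b ∈ Finset.univ) => hH a b)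
  simp only [Finset.sum_const_zero, add_zero] at hsum
  have hlow := ENNReal.Tendsto.sub (tendsto_const_nhds (x := (1 : ENNReal))) hsum
    (Or.inl ENNReal.one_ne_top)
  rw [tsub_zero] at hlow
  refine tendsto_of_tendsto_of_tendsto_of_le_of_le' hlow tendsto_const_nhds ?_
    (Filter.Eventually.of_forall fun N => prob_le_one)
  filter_upwards [Filter.eventually_gt_atTop 0] with N hN
  rw [tsub_le_iff_right]
  rw [← measure_univ (μ := Measure.pi fun _ : Fin N => μ)]
  refine (measure_mono (t := {p : Fin N → S2 | Module.finrank ℝ (VN N p) = 3} ∪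
    ({p : Fin N → S2 | 1 / 9 * (N : ℝ) ^ 2 ≤
      |∑ i, ∑ j, ⟪(p i : V), (p j : V)⟫ ^ 2 - 1 / 3 * (N : ℝ) ^ 2|} ∪
    ⋃ a ∈ Finset.univ, ⋃ b ∈ Finset.univ, {p : Fin N → S2 | 1 / 100 * (N : ℝ) ^ 2 ≤
      |∑ i, ∑ j, hent a b (p i) (p j) - (if a = b then 2 / 45 else 0) * (N : ℝ) ^ 2|})) ?_).trans ?_
  · intro p _
    by_contra hn
    simp only [Set.mem_union, Set.mem_ofPred_eq, Set.mem_iUnion, not_or, not_exists, not_le,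
      Finset.mem_univ, forall_true_left] at hn
    obtain ⟨h1, h2, h3⟩ := hn
    refine h1 (det_main hN p ?_ h3)
    have := (abs_lt.mp h2).2
    linarith
  · refine (measure_union_le _ _).trans (add_le_add le_rfl ?_)
    refine (measure_union_le _ _).trans (add_le_add le_rfl ?_)
    refine (measure_biUnion_finset_le _ _).trans (Finset.sum_le_sum fun a _ => ?_)
    exact measure_biUnion_finset_le _ _
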